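/- There is an absolute constant C > 0 such that the following holds. Let ℓ, h, k ∈ ℕ with 1 ≤ h < k and gcd(h,k) = 1, let h̄ be any integer with h·h̄ ≡ 1 (mod k), and let v_0, …, v_r be the denominators of the convergents of the continued fraction expansion of h/k. Then for every α ∈ (1/k)·ℤ one has |V₁(h̄/k, α)| ≤ (1/k)·∑_{m=1}^{r} v_m · log(v_m/v_{m−1}) + C. -/

import Mathlib

open Real Filter Finset

/-- The sawtooth function `((x))`: `0` if `x ∈ ℤ`, and `1/2 - {x}` otherwise. -/
noncomputable def sawtooth (x : ℝ) : ℝ := if Int.fract x = 0 then 0 else 1 / 2 - Int.fract x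

/-- Partial sums of the series defining `V₁(x, α) = 2 ∑_{m≥1} (cos(2πmα)/m)·((mx))`. -/
noncomputable def V1sum (x α : ℝ) (M : ℕ) : ℝ :=
  2 * ∑ m ∈ Finset.Icc 1 M, Real.cos (2 * π * m * α) / m * sawtooth (m * x)

/-!
By the finite Fourier expansion of `((n/k))` and the Fourier series of the sawtooth,
`V₁(h̄/k, α) = ∑_{0<j<k} (π/2k) cot(πj/k) (((jh̄/k + α)) + ((jh̄/k - α)))`. Up to a bounded error
the cotangent may be replaced by its poles, which turns `V₁` into the two sums
`∑_{0<j<k} ((jh̄/k ± α))/j`.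

Summation by parts reduces these to the sums of `((jh̄/k ± α))` over `j ≤ n`. Modulo `k = v_r` one
has `h̄ ≡ ± v_{r+1}` (extending the continued fraction by any further digit), and reciprocity along
the Euclidean algorithm for `v_{r+1}/v_r`, stopped at the index `m`, bounds such a sum by
`2 ∑_{m≤i<r} v_{i+1}/v_i + n v_m/(2 v_r)`. For `v_r/v_m ≤ n < v_r/v_{m-1}` the second term
contributes `v_m log(v_m/v_{m-1})/(2k)` after division by `n(n+1)`; all other contributions stay
bounded because the denominators grow at least as fast as the Fibonacci numbers.
-/

/-! ### Sums of the sawtooth along a rotation -/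

/-- The centred fractional part `{x} - 1/2`, which differs from `-((x))` only at the integers.
Unlike the sawtooth it is right-continuous, and this makes its reciprocity formula exact. -/
noncomputable def centeredFract (x : ℝ) : ℝ := Int.fract x - 1 / 2

theorem abs_centeredFract_le (x : ℝ) : |centeredFract x| ≤ 1 / 2 := by
  have hnonneg := Int.fract_nonneg x
  have hlt := Int.fract_lt_one x
  rw [centeredFract, abs_le]
  constructor <;> linarith

theorem centeredFract_add_intCast (x : ℝ) (n : ℤ) : centeredFract (x + n) = centeredFract x := by
  simp only [centeredFract, Int.fract_add_intCast]

theorem centeredFract_of_eq_intCast_add {x y : ℝ} {n : ℤ} (hy0 : 0 ≤ y) (hy1 : y < 1)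
    (hx : x = n + y) : centeredFract x = y - 1 / 2 := by
  rw [centeredFract, hx, Int.fract_intCast_add, Int.fract_eq_self.2 ⟨hy0, hy1⟩]

theorem sawtooth_eq_centeredFract (x : ℝ) :
    sawtooth x = (centeredFract (-x) - centeredFract x) / 2 := by
  unfold sawtooth centeredFract
  split_ifs with hx
  · rw [hx, Int.fract_neg_eq_zero.2 hx]; ring
  · rw [Int.fract_neg hx]; ring

theorem sawtooth_neg (x : ℝ) : sawtooth (-x) = -sawtooth x := by
  rw [sawtooth_eq_centeredFract, sawtooth_eq_centeredFract, neg_neg]; ring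

theorem sawtooth_add_intCast (x : ℝ) (n : ℤ) : sawtooth (x + n) = sawtooth x := by
  simp only [sawtooth, Int.fract_add_intCast]

theorem abs_sawtooth_le (x : ℝ) : |sawtooth x| ≤ 1 / 2 := by
  rw [sawtooth_eq_centeredFract, abs_div, abs_two]
  linarith [abs_sub (centeredFract (-x)) (centeredFract x), abs_centeredFract_le x,
    abs_centeredFract_le (-x)]

/-- The sum of the centred fractional part along the first `n` points of the orbit of `β` under
the rotation by `θ`. -/
noncomputable def rotationSum (n : ℕ) (θ β : ℝ) : ℝ := ∑ c ∈ range n, centeredFract (c * θ + β)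

theorem abs_rotationSum_le (n : ℕ) (θ β : ℝ) : |rotationSum n θ β| ≤ n / 2 :=
  calc |rotationSum n θ β| ≤ ∑ c ∈ range n, |centeredFract (c * θ + β)| :=
        abs_sum_le_sum_abs _ _
    _ ≤ ∑ _c ∈ range n, (1 / 2 : ℝ) := sum_le_sum fun _ _ => abs_centeredFract_le _
    _ = n / 2 := by simp [div_eq_mul_inv]

theorem rotationSum_add_intCast (n : ℕ) (θ β : ℝ) (b : ℤ) :
    rotationSum n (θ + b) β = rotationSum n θ β := by
  refine sum_congr rfl fun c _ => ?_
  rw [← centeredFract_add_intCast (c * θ + β) (c * b)]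
  push_cast
  ring_nf

theorem rotationSum_neg (n : ℕ) (θ β : ℝ) :
    rotationSum n (-θ) β = rotationSum n θ (β - (n - 1) * θ) := by
  unfold rotationSum
  rw [← sum_range_reflect]
  refine sum_congr rfl fun c hc => ?_
  have hcast : ((n - 1 - c : ℕ) : ℝ) = n - 1 - c := by
    have := mem_range.1 hc
    rw [Nat.cast_sub (by omega), Nat.cast_sub (by omega), Nat.cast_one]
  rw [hcast]
  ring_nf

/-- A primitive of the centred fractional part for the rotation by `θ`, up to the correction of
`rotationPotential_sub_one` whenever the rotation passes an integer. -/
noncomputable def rotationPotential (θ y : ℝ) : ℝ := y * (y - 1) / (2 * θ) - y / 2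

theorem rotationPotential_add {θ : ℝ} (hθ : θ ≠ 0) (y : ℝ) :
    rotationPotential θ (y + θ) = rotationPotential θ y + (y - 1 / 2) := by
  unfold rotationPotential
  field_simp
  ring

theorem rotationPotential_sub_one {θ : ℝ} (hθ : θ ≠ 0) (y : ℝ) :
    rotationPotential θ (y - 1) = rotationPotential θ y - ((y - 1) / θ - 1 / 2) := by
  unfold rotationPotential
  field_simp
  ring

theorem rotationPotential_mem_Icc {θ y : ℝ} (hθ0 : 0 < θ) (hθ1 : θ ≤ 1) (hy0 : 0 ≤ y)
    (hy1 : y ≤ 1) : rotationPotential θ y ∈ Set.Icc (-(1 / θ)) 0 := by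
  have hmul : θ * rotationPotential θ y = -(y * (1 - y + θ)) / 2 := by
    unfold rotationPotential
    field_simp
    ring
  have hprod : y * (1 - y + θ) ≤ 2 := by nlinarith
  constructor
  · rw [← neg_div, div_le_iff₀' hθ0, hmul]
    linarith
  · refine nonpos_of_mul_nonpos_right ?_ hθ0
    rw [hmul]
    have : 0 ≤ y * (1 - y + θ) := by apply mul_nonneg <;> linarith
    linarith

/-- Reciprocity: the sum telescopes through the potential except when the orbit passes an integer,
and the corrections at these passages form an orbit of the rotation by `1 / θ`. -/
theorem rotationSum_eq_potential_add_sum {θ β : ℝ} (hθ0 : 0 < θ) (hθ1 : θ ≤ 1) (hβ : 0 ≤ β)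
    (hβ1 : β < 1) (n : ℕ) :
    rotationSum n θ β = rotationPotential θ (Int.fract (n * θ + β)) - rotationPotential θ β +
      ∑ j ∈ range ⌊n * θ + β⌋₊, centeredFract ((β - 1 - j) / θ) := by
  induction n with
  | zero => simp [rotationSum, Int.fract_eq_self.2 ⟨hβ, hβ1⟩, Nat.floor_eq_zero.2 hβ1]
  | succ n ih =>
    set N := ⌊n * θ + β⌋₊ with hN
    set y := Int.fract (n * θ + β) with hy
    have hy0 : 0 ≤ y := Int.fract_nonneg _
    have hy1 : y < 1 := Int.fract_lt_one _
    have hpoint : n * θ + β = (N : ℤ) + y := by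
      rw [hN, Int.natCast_floor_eq_floor (by positivity), hy, Int.floor_add_fract]
    have hnext : ((n + 1 : ℕ) : ℝ) * θ + β = y + θ + N := by
      push_cast at hpoint ⊢
      linarith
    have hsum : rotationSum (n + 1) θ β = rotationSum n θ β + (y - 1 / 2) := by
      rw [rotationSum, sum_range_succ, centeredFract_of_eq_intCast_add hy0 hy1 hpoint, rotationSum]
    rw [hsum, ih, hnext]
    rcases lt_or_ge (y + θ) 1 with hstay | hpass
    · rw [Nat.floor_add_natCast (by positivity), Nat.floor_eq_zero.2 hstay, zero_add,
        Int.fract_add_natCast, Int.fract_eq_self.2 ⟨by positivity, hstay⟩,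
        rotationPotential_add hθ0.ne']
      ring
    · have hz0 : 0 ≤ y + θ - 1 := by linarith
      have hz1 : y + θ - 1 < 1 := by linarith
      have hsplit : y + θ + N = y + θ - 1 + (N + 1 : ℕ) := by push_cast; ring
      have hcorr : centeredFract ((β - 1 - N) / θ) = (y + θ - 1) / θ - 1 / 2 := by
        refine centeredFract_of_eq_intCast_add (n := -(n + 1)) (by positivity)
          (by rw [div_lt_one hθ0]; linarith) ?_
        push_cast at hpoint ⊢
        field_simp
        linarith
      rw [hsplit, Nat.floor_add_natCast hz0, Nat.floor_eq_zero.2 hz1, zero_add,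
        Int.fract_add_natCast, Int.fract_eq_self.2 ⟨hz0, hz1⟩, sum_range_succ, hcorr,
        rotationPotential_sub_one hθ0.ne', rotationPotential_add hθ0.ne']
      ring

theorem abs_rotationSum_le_of_recip {θ B : ℝ} (hθ0 : 0 < θ) (hθ1 : θ ≤ 1) (n : ℕ)
    (hB : ∀ (N : ℕ) (β : ℝ), N ≤ n * θ + 1 → |rotationSum N (1 / θ) β| ≤ B) (β : ℝ) :
    |rotationSum n θ β| ≤ 1 / θ + B := by
  set t := Int.fract β with ht
  have ht0 : 0 ≤ t := Int.fract_nonneg β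
  have ht1 : t < 1 := Int.fract_lt_one β
  set N := ⌊n * θ + t⌋₊
  have hperiod : rotationSum n θ β = rotationSum n θ t := by
    refine sum_congr rfl fun c _ => ?_
    rw [← centeredFract_add_intCast (c * θ + t) ⌊β⌋, add_assoc, ht, Int.fract_add_floor]
  have hrecip : ∑ j ∈ range N, centeredFract ((t - 1 - j) / θ) =
      rotationSum N (-(1 / θ)) ((t - 1) / θ) :=
    sum_congr rfl fun j _ => by ring_nf
  have hN : (N : ℝ) ≤ n * θ + 1 := (Nat.floor_le (by positivity)).trans (by linarith)
  obtain ⟨hend_ge, hend_le⟩ := rotationPotential_mem_Icc hθ0 hθ1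
    (Int.fract_nonneg (n * θ + t)) (Int.fract_lt_one _).le
  obtain ⟨hstart_ge, hstart_le⟩ := rotationPotential_mem_Icc hθ0 hθ1 ht0 ht1.le
  rw [hperiod, rotationSum_eq_potential_add_sum hθ0 hθ1 ht0 ht1, hrecip, rotationSum_neg]
  refine (abs_add_le _ _).trans (add_le_add ?_ (hB N _ hN))
  rw [abs_le]
  constructor <;> linarith

/-- The induction follows the Euclidean algorithm: reciprocity inverts the slope, and periodicity
subtracts the partial quotient. -/
theorem abs_rotationSum_euclidean_le {v : ℕ → ℝ} (hpos : ∀ m, 0 < v m) (hmono : Monotone v)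
    (hrec : ∀ m, ∃ b : ℤ, v (m + 2) = b * v (m + 1) + v m) {m r : ℕ} (hmr : m ≤ r) :
    ∀ (n : ℕ) (β : ℝ), |rotationSum n (v (r + 1) / v r) β| ≤
      2 * ∑ i ∈ Ico m r, v (i + 1) / v i + n * (v m / (2 * v r)) := by
  induction r, hmr using Nat.le_induction with
  | base =>
    intro n β
    have hm := (hpos m).ne'
    convert abs_rotationSum_le n (v (m + 1) / v m) β using 1
    rw [Ico_self, sum_empty]
    field_simp
    ring
  | succ r hmr ih =>
    intro n β
    have hr := hpos r
    have hr1 := hpos (r + 1)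
    have hslope : v r / v (r + 1) ≤ 1 := (div_le_one hr1).2 (hmono r.le_succ)
    obtain ⟨b, hb⟩ := hrec r
    have hshift : v (r + 2) / v (r + 1) = v r / v (r + 1) + b := by
      rw [hb]
      field_simp
      ring
    have hinv : ∀ (N : ℕ) (β' : ℝ), N ≤ n * (v r / v (r + 1)) + 1 →
        |rotationSum N (1 / (v r / v (r + 1))) β'| ≤ 2 * ∑ i ∈ Ico m r, v (i + 1) / v i +
          (n * (v r / v (r + 1)) + 1) * (v m / (2 * v r)) := by
      intro N β' hN
      rw [one_div_div]
      have hm := hpos m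
      exact (ih N β').trans (by gcongr)
    have hround : v m / (2 * v r) ≤ v (r + 1) / v r := by
      rw [div_le_div_iff₀ (by positivity) hr]
      nlinarith [hmono hmr, hmono r.le_succ]
    rw [hshift, rotationSum_add_intCast, sum_Ico_succ_top hmr]
    calc |rotationSum n (v r / v (r + 1)) β|
        ≤ v (r + 1) / v r + (2 * ∑ i ∈ Ico m r, v (i + 1) / v i +
          (n * (v r / v (r + 1)) + 1) * (v m / (2 * v r))) := by
          simpa only [one_div_div] using
            abs_rotationSum_le_of_recip (by positivity) hslope n hinv β
      _ = v (r + 1) / v r + (2 * ∑ i ∈ Ico m r, v (i + 1) / v i +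
          n * (v m / (2 * v (r + 1))) + v m / (2 * v r)) := by field_simp; ring
      _ ≤ 2 * (∑ i ∈ Ico m r, v (i + 1) / v i + v (r + 1) / v r) +
          n * (v m / (2 * v (r + 1))) := by linarith

theorem abs_sum_sawtooth_le {n : ℕ} {θ B : ℝ} (hB : ∀ β, |rotationSum n θ β| ≤ B) (β : ℝ) :
    |∑ j ∈ Icc 1 n, sawtooth (j * θ + β)| ≤ B := by
  have hsum : ∑ j ∈ Icc 1 n, sawtooth (j * θ + β) =
      (rotationSum n (-θ) (-(θ + β)) - rotationSum n θ (θ + β)) / 2 := by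
    rw [← Ico_add_one_right_eq_Icc, sum_Ico_eq_sum_range, add_tsub_cancel_right]
    unfold rotationSum
    rw [← sum_sub_distrib, sum_div]
    refine sum_congr rfl fun c _ => ?_
    rw [sawtooth_eq_centeredFract]
    push_cast
    ring_nf
  have hle := abs_sub (rotationSum n (-θ) (-(θ + β))) (rotationSum n θ (θ + β))
  rw [hsum, abs_div, abs_two]
  rw [rotationSum_neg] at hle ⊢
  linarith [hB (-(θ + β) - (n - 1) * θ), hB (θ + β)]

/-! ### Summation by parts over blocks -/

theorem sum_div_eq_sum_partialSum_div {K : Type*} [Field K] [CharZero K] {k : ℕ} (hk : 1 ≤ k)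
    (g : ℕ → K) :
    ∑ j ∈ Ico 1 k, g j / j =
      (∑ j ∈ Ico 1 k, g j) / k + ∑ n ∈ Ico 1 k, (∑ j ∈ Icc 1 n, g j) / (n * (n + 1)) := by
  induction k, hk using Nat.le_induction with
  | base => simp
  | succ k hk ih =>
    have hk0 : (k : K) ≠ 0 := Nat.cast_ne_zero.2 (by omega)
    have hk1 : (k : K) + 1 ≠ 0 := Nat.cast_add_one_ne_zero k
    rw [sum_Ico_succ_top hk, sum_Ico_succ_top hk, sum_Ico_succ_top hk, ih,
      ← Ico_add_one_right_eq_Icc, sum_Ico_succ_top hk]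
    push_cast
    field_simp
    ring

theorem sum_Ico_one_div_mul_succ {K : Type*} [Field K] [CharZero K] {a b : ℕ} (ha : 0 < a)
    (hab : a ≤ b) : ∑ n ∈ Ico a b, 1 / ((n : K) * (n + 1)) = 1 / a - 1 / b := by
  induction b, hab using Nat.le_induction with
  | base => simp
  | succ b hab ih =>
    have hb : (b : K) ≠ 0 := Nat.cast_ne_zero.2 (by omega)
    have hb1 : (b : K) + 1 ≠ 0 := Nat.cast_add_one_ne_zero b
    rw [sum_Ico_succ_top hab, ih]
    push_cast
    field_simp
    ring

theorem sum_Ico_one_div_succ_le_log {a b : ℕ} (ha : 0 < a) (hab : a ≤ b) :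
    ∑ n ∈ Ico a b, 1 / ((n : ℝ) + 1) ≤ log (b / a) := by
  have ha0 : (a : ℝ) ≠ 0 := Nat.cast_ne_zero.2 ha.ne'
  induction b, hab using Nat.le_induction with
  | base => simp [ha0]
  | succ b hab ih =>
    have hb : (0 : ℝ) < b := Nat.cast_pos.2 (by omega)
    have hstep : 1 / ((b : ℝ) + 1) ≤ log ((b + 1) / b) := by
      refine le_trans (le_of_eq ?_) (one_sub_inv_le_log_of_pos (by positivity))
      field_simp
      ring
    have hsplit : log ((b + 1 : ℕ) / a) = log (b / a) + log ((b + 1) / b) := by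
      rw [← log_mul (by positivity) (by positivity)]
      congr 1
      push_cast
      field_simp
    rw [sum_Ico_succ_top hab, hsplit]
    exact add_le_add ih hstep

theorem sum_Ico_ceil_le {X Y E : ℝ} (hX : 1 ≤ X) (hXY : X ≤ Y) (hE : 0 ≤ E) :
    ∑ n ∈ Ico ⌈X⌉₊ ⌈Y⌉₊, (E + n * (1 / (2 * X))) / (n * (n + 1)) ≤
      E / X + (log (Y / X) + 1) / (2 * X) := by
  have hX0 : 0 < X := by linarith
  have hY0 : 0 < Y := by linarith
  have hceil : ⌈X⌉₊ ≤ ⌈Y⌉₊ := Nat.ceil_mono hXY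
  have hXceil : X ≤ ⌈X⌉₊ := Nat.le_ceil X
  have hceil0 : 0 < ⌈X⌉₊ := Nat.ceil_pos.2 hX0
  have hsplit : ∑ n ∈ Ico ⌈X⌉₊ ⌈Y⌉₊, (E + n * (1 / (2 * X))) / (n * (n + 1)) =
      E * ∑ n ∈ Ico ⌈X⌉₊ ⌈Y⌉₊, 1 / ((n : ℝ) * (n + 1)) +
        1 / (2 * X) * ∑ n ∈ Ico ⌈X⌉₊ ⌈Y⌉₊, 1 / ((n : ℝ) + 1) := by
    rw [mul_sum, mul_sum, ← sum_add_distrib]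
    refine sum_congr rfl fun n hn => ?_
    have hn0 : (n : ℝ) ≠ 0 := Nat.cast_ne_zero.2 (hceil0.trans_le (mem_Ico.1 hn).1).ne'
    field_simp
  have hquad : ∑ n ∈ Ico ⌈X⌉₊ ⌈Y⌉₊, 1 / ((n : ℝ) * (n + 1)) ≤ 1 / X :=
    calc _ = 1 / (⌈X⌉₊ : ℝ) - 1 / ⌈Y⌉₊ := sum_Ico_one_div_mul_succ hceil0 hceil
      _ ≤ 1 / (⌈X⌉₊ : ℝ) := sub_le_self _ (by positivity)
      _ ≤ 1 / X := one_div_le_one_div_of_le hX0 hXceil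
  have hharm : ∑ n ∈ Ico ⌈X⌉₊ ⌈Y⌉₊, 1 / ((n : ℝ) + 1) ≤ log (Y / X) + 1 :=
    calc _ ≤ log (⌈Y⌉₊ / ⌈X⌉₊) := sum_Ico_one_div_succ_le_log hceil0 hceil
      _ ≤ log (2 * (Y / X)) := by
        have hYceil : (⌈Y⌉₊ : ℝ) ≤ 2 * Y := by linarith [Nat.ceil_lt_add_one hY0.le]
        have : (0 : ℝ) < ⌈Y⌉₊ := Nat.cast_pos.2 (hceil0.trans_le hceil)
        refine log_le_log (by positivity) ?_
        rw [← mul_div_assoc]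
        gcongr
      _ = log 2 + log (Y / X) := log_mul two_ne_zero (by positivity)
      _ ≤ log (Y / X) + 1 := by linarith [log_two_lt_d9]
  calc _ ≤ E * (1 / X) + 1 / (2 * X) * (log (Y / X) + 1) := by rw [hsplit]; gcongr
    _ = E / X + (log (Y / X) + 1) / (2 * X) := by ring

theorem sum_Ico_eq_sum_range_Ico_of_antitone {M : Type*} [AddCommMonoid M] {A : ℕ → ℕ}
    (hA : Antitone A) (f : ℕ → M) (r : ℕ) :
    ∑ n ∈ Ico (A r) (A 0), f n = ∑ m ∈ range r, ∑ n ∈ Ico (A (m + 1)) (A m), f n := by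
  induction r with
  | zero => simp
  | succ r ih =>
    rw [sum_range_succ, ← ih, add_comm (∑ n ∈ Ico (A r) (A 0), f n),
      sum_Ico_consecutive f (hA r.le_succ) (hA r.zero_le)]

section FibonacciGrowth

variable {v : ℕ → ℝ} (hpos : ∀ m, 0 < v m) (hmono : Monotone v)

include hpos hmono

theorem sum_block_abs_div_mul_succ_le {G : ℕ → ℝ} {m r : ℕ} (hmr : m + 1 ≤ r)
    (hG : ∀ n, |G n| ≤
      2 * ∑ i ∈ Ico (m + 1) r, v (i + 1) / v i + n * (v (m + 1) / (2 * v r))) :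
    ∑ n ∈ Ico ⌈v r / v (m + 1)⌉₊ ⌈v r / v m⌉₊, |G n| / (n * (n + 1)) ≤
      2 / v r * (v (m + 1) * ∑ i ∈ Ico (m + 1) r, v (i + 1) / v i) +
        1 / (2 * v r) * (v (m + 1) * log (v (m + 1) / v m)) + 1 / (2 * v r) * v (m + 1) := by
  have hr := hpos r
  have hm0 := hpos m
  have hm1 := hpos (m + 1)
  have hE : 0 ≤ 2 * ∑ i ∈ Ico (m + 1) r, v (i + 1) / v i :=
    mul_nonneg zero_le_two (sum_nonneg fun i _ => (div_pos (hpos (i + 1)) (hpos i)).le)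
  have hscale : 1 / (2 * (v r / v (m + 1))) = v (m + 1) / (2 * v r) := by field_simp
  have hratio : v r / v m / (v r / v (m + 1)) = v (m + 1) / v m := by field_simp
  have hle := sum_Ico_ceil_le ((one_le_div hm1).2 (hmono hmr))
    (div_le_div_of_nonneg_left hr.le hm0 (hmono m.le_succ)) hE
  rw [hscale, hratio] at hle
  refine (sum_le_sum fun n _ => div_le_div_of_nonneg_right (hG n) (by positivity)).trans
    (hle.trans_eq ?_)
  field_simp
  ring

variable (hadd : ∀ m, v m + v (m + 1) ≤ v (m + 2))

include hadd

theorem sum_range_succ_le_three_mul : ∀ s, ∑ m ∈ range (s + 1), v m ≤ 3 * v s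
  | 0 => by linarith [hpos 0, sum_range_one v]
  | 1 => by linarith [hmono zero_le_one, hpos 1, sum_range_succ v 1, sum_range_one v]
  | s + 2 => by
    rw [sum_range_succ, sum_range_succ]
    linarith [sum_range_succ_le_three_mul s, hadd s, hmono s.le_succ]

theorem sum_mul_sum_ratio_le (s : ℕ) :
    ∑ m ∈ range (s + 1), v m * ∑ i ∈ Ico m s, v (i + 1) / v i ≤ 9 * v s := by
  have hswap : ∑ m ∈ range (s + 1), v m * ∑ i ∈ Ico m s, v (i + 1) / v i ≤
      3 * ∑ i ∈ range s, v (i + 1) := by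
    induction s with
    | zero => simp
    | succ s ih =>
      have hlast : v (s + 1) / v s * ∑ m ∈ range (s + 1), v m ≤ 3 * v (s + 1) := by
        rw [div_mul_eq_mul_div, div_le_iff₀ (hpos s)]
        nlinarith [sum_range_succ_le_three_mul hpos hmono hadd s, hpos (s + 1)]
      have hsplit : ∀ m ∈ range (s + 1), v m * ∑ i ∈ Ico m (s + 1), v (i + 1) / v i =
          v m * ∑ i ∈ Ico m s, v (i + 1) / v i + v (s + 1) / v s * v m := fun m hm => by
        rw [sum_Ico_succ_top (by simpa [Nat.lt_succ_iff] using hm)]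
        ring
      rw [sum_range_succ, sum_range_succ (fun i => v (i + 1)), sum_congr rfl hsplit,
        sum_add_distrib, ← mul_sum, Ico_self, sum_empty]
      linarith
  have hshift := sum_range_succ' v s
  linarith [sum_range_succ_le_three_mul hpos hmono hadd s, hpos 0]

theorem sum_abs_div_mul_succ_le {G : ℕ → ℝ} {r : ℕ}
    (hG : ∀ m ≤ r, ∀ n, |G n| ≤ 2 * ∑ i ∈ Ico m r, v (i + 1) / v i + n * (v m / (2 * v r))) :
    ∑ n ∈ Ico 1 ⌈v r / v 0⌉₊, |G n| / (n * (n + 1)) ≤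
      1 / (2 * v r) * ∑ m ∈ range r, v (m + 1) * log (v (m + 1) / v m) + 39 / 2 := by
  have hr := hpos r
  have hanti : Antitone fun m => ⌈v r / v m⌉₊ := fun i j hij =>
    Nat.ceil_mono (div_le_div_of_nonneg_left hr.le (hpos i) (hmono hij))
  have hone : ⌈v r / v r⌉₊ = 1 := by rw [div_self hr.ne', Nat.ceil_one]
  have hmain := (sum_Ico_eq_sum_range_Ico_of_antitone hanti
    (fun n => |G n| / (n * (n + 1))) r).trans_le (sum_le_sum fun m hm =>
      sum_block_abs_div_mul_succ_le hpos hmono (mem_range.1 hm) (hG (m + 1) (mem_range.1 hm)))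
  rw [hone, sum_add_distrib, sum_add_distrib, ← mul_sum, ← mul_sum, ← mul_sum] at hmain
  have hweighted : 2 / v r * ∑ m ∈ range r, v (m + 1) * ∑ i ∈ Ico (m + 1) r, v (i + 1) / v i ≤
      18 := by
    rw [div_mul_eq_mul_div, div_le_iff₀ hr]
    have hfirst : 0 ≤ v 0 * ∑ i ∈ Ico 0 r, v (i + 1) / v i := mul_nonneg (hpos 0).le
      (sum_nonneg fun i _ => (div_pos (hpos (i + 1)) (hpos i)).le)
    linarith [sum_mul_sum_ratio_le hpos hmono hadd r,
      sum_range_succ' (fun m => v m * ∑ i ∈ Ico m r, v (i + 1) / v i) r]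
  have hplain : 1 / (2 * v r) * ∑ m ∈ range r, v (m + 1) ≤ 3 / 2 := by
    rw [div_mul_eq_mul_div, div_le_iff₀ (by positivity)]
    linarith [sum_range_succ_le_three_mul hpos hmono hadd r, hpos 0, sum_range_succ' v r]
  linarith

theorem abs_sum_div_le_of_abs_partialSum_le {g : ℕ → ℝ} {k r : ℕ} (hk : v r / v 0 = k)
    (hg : ∀ j, |g j| ≤ 1 / 2) (hG : ∀ m ≤ r, ∀ n, |∑ j ∈ Icc 1 n, g j| ≤
      2 * ∑ i ∈ Ico m r, v (i + 1) / v i + n * (v m / (2 * v r))) :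
    |∑ j ∈ Ico 1 k, g j / j| ≤
      1 / (2 * v r) * ∑ m ∈ range r, v (m + 1) * log (v (m + 1) / v m) + 20 := by
  have hk0 : (0 : ℝ) < k := hk ▸ div_pos (hpos r) (hpos 0)
  have hk1 : 1 ≤ k := by exact_mod_cast hk0
  have hends : |(∑ j ∈ Ico 1 k, g j) / k| ≤ 1 / 2 := by
    rw [abs_div, Nat.abs_cast, div_le_iff₀ hk0]
    calc |∑ j ∈ Ico 1 k, g j| ≤ ∑ _j ∈ Ico 1 k, (1 / 2 : ℝ) :=
          (abs_sum_le_sum_abs _ _).trans (sum_le_sum fun j _ => hg j)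
      _ = ((k - 1 : ℕ) : ℝ) * (1 / 2) := by rw [sum_const, Nat.card_Ico, nsmul_eq_mul]
      _ ≤ 1 / 2 * k := by rw [Nat.cast_sub hk1]; push_cast; linarith
  have hsum := sum_abs_div_mul_succ_le hpos hmono hadd hG
  rw [hk, Nat.ceil_natCast] at hsum
  have habs : |∑ n ∈ Ico 1 k, (∑ j ∈ Icc 1 n, g j) / ((n : ℝ) * (n + 1))| ≤
      ∑ n ∈ Ico 1 k, |∑ j ∈ Icc 1 n, g j| / ((n : ℝ) * (n + 1)) := by
    refine (abs_sum_le_sum_abs _ _).trans_eq (sum_congr rfl fun n _ => ?_)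
    rw [abs_div, abs_of_nonneg (by positivity : (0 : ℝ) ≤ n * (n + 1))]
  rw [sum_div_eq_sum_partialSum_div hk1]
  linarith [abs_add_le ((∑ j ∈ Ico 1 k, g j) / k)
    (∑ n ∈ Ico 1 k, (∑ j ∈ Icc 1 n, g j) / ((n : ℝ) * (n + 1)))]

end FibonacciGrowth

/-! ### The Fourier series of the sawtooth -/

theorem norm_sum_range_pow_succ_le {w : ℂ} (hw : ‖w‖ = 1) (hw1 : w ≠ 1) (n : ℕ) :
    ‖∑ m ∈ range n, w ^ (m + 1)‖ ≤ 2 / ‖w - 1‖ := by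
  have hgeom : ∑ m ∈ range n, w ^ (m + 1) = w * ((w ^ n - 1) / (w - 1)) := by
    rw [← geom_sum_eq hw1, mul_sum]
    exact sum_congr rfl fun m _ => pow_succ' w m
  rw [hgeom, norm_mul, hw, one_mul, norm_div]
  gcongr
  calc ‖w ^ n - 1‖ ≤ ‖w ^ n‖ + ‖(1 : ℂ)‖ := norm_sub_le _ _
    _ = 2 := by rw [norm_pow, hw, one_pow, norm_one]; norm_num

theorem one_sub_mem_slitPlane {w : ℂ} (hw : ‖w‖ = 1) (hw1 : w ≠ 1) :
    1 - w ∈ Complex.slitPlane := by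
  refine Or.inl ?_
  rw [Complex.sub_re, Complex.one_re, sub_pos]
  refine lt_of_le_of_ne (hw ▸ Complex.re_le_norm w) fun hre => hw1 ?_
  rw [← hw] at hre
  rw [Complex.eq_coe_norm_of_nonneg (Complex.re_eq_norm.1 hre), hw, Complex.ofReal_one]

theorem tendsto_sum_pow_div {w : ℂ} (hw : ‖w‖ = 1) (hw1 : w ≠ 1) :
    Tendsto (fun n => ∑ m ∈ range n, w ^ m / m) atTop (nhds (-Complex.log (1 - w))) := by
  have hcauchy : CauchySeq fun n => ∑ m ∈ range n, (1 / ((m : ℝ) + 1)) • w ^ (m + 1) :=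
    Antitone.cauchySeq_series_mul_of_tendsto_zero_of_bounded
      (antitone_nat_of_succ_le fun n => by push_cast; gcongr; linarith)
      tendsto_one_div_add_atTop_nhds_zero_nat (norm_sum_range_pow_succ_le hw hw1)
  obtain ⟨l, hl⟩ := cauchySeq_tendsto_of_complete hcauchy
  have hsum : Tendsto (fun n => ∑ m ∈ range n, w ^ m / m) atTop (nhds l) := by
    refine (tendsto_add_atTop_iff_nat 1).1 (hl.congr fun n => ?_)
    rw [sum_range_succ', Nat.cast_zero, div_zero, add_zero]
    refine sum_congr rfl fun m _ => ?_
    rw [Complex.real_smul]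
    push_cast
    ring
  have habel := Complex.tendsto_tsum_powerSeries_nhdsWithin_lt hsum
  rw [tendsto_map'_iff] at habel
  have hlog : Tendsto (fun x : ℝ => -Complex.log (1 - w * x)) (nhdsWithin 1 (Set.Iio 1))
      (nhds (-Complex.log (1 - w))) := by
    have hcont : ContinuousAt (fun x : ℝ => -Complex.log (1 - w * x)) 1 := by
      refine (ContinuousAt.clog (by fun_prop) ?_).neg
      simpa using one_sub_mem_slitPlane hw hw1
    simpa using hcont.tendsto.mono_left nhdsWithin_le_nhds
  have hseries : ∀ᶠ x : ℝ in nhdsWithin 1 (Set.Iio 1),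
      -Complex.log (1 - w * x) = ∑' m : ℕ, w ^ m / m * (x : ℂ) ^ m := by
    filter_upwards [Ioo_mem_nhdsLT (zero_lt_one (α := ℝ))] with x hx
    have hnorm : ‖w * x‖ < 1 := by
      rw [norm_mul, hw, one_mul, Complex.norm_real, norm_of_nonneg hx.1.le]
      exact hx.2
    rw [← (Complex.hasSum_taylorSeries_neg_log hnorm).tsum_eq]
    exact tsum_congr fun m => by rw [mul_pow]; ring
  rwa [← tendsto_nhds_unique habel (hlog.congr' hseries)]

theorem arg_one_sub_exp {t : ℝ} (ht0 : 0 < t) (ht1 : t < 1) :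
    (1 - Complex.exp ((2 * π * t : ℝ) * Complex.I)).arg = π * (t - 1 / 2) := by
  have hsin : 0 < 2 * sin (π * t) :=
    mul_pos two_pos (sin_pos_of_pos_of_lt_pi (by positivity) (by nlinarith [pi_pos]))
  have hpolar : 1 - Complex.exp ((2 * π * t : ℝ) * Complex.I) = (2 * sin (π * t) : ℝ) *
      (Complex.cos (π * (t - 1 / 2) : ℝ) + Complex.sin (π * (t - 1 / 2) : ℝ) * Complex.I) := by
    have hdouble : 2 * π * t = 2 * (π * t) := by ring
    have hshift : π * (t - 1 / 2) = π * t - π / 2 := by ring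
    rw [Complex.exp_mul_I, ← Complex.ofReal_cos, ← Complex.ofReal_sin, ← Complex.ofReal_cos,
      ← Complex.ofReal_sin, hdouble, hshift, cos_sub_pi_div_two, sin_sub_pi_div_two, cos_two_mul,
      sin_two_mul]
    push_cast
    linear_combination -2 * Complex.sin_sq_add_cos_sq (π * t : ℂ)
  rw [hpolar, Complex.arg_mul_cos_add_sin_mul_I hsin]
  constructor <;> nlinarith [pi_pos]

theorem exp_two_pi_mul_I_ne_one {t : ℝ} (ht0 : 0 < t) (ht1 : t < 1) :
    Complex.exp ((2 * π * t : ℝ) * Complex.I) ≠ 1 := fun hexp => by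
  obtain ⟨n, hn⟩ := Complex.exp_eq_one_iff.1 hexp
  have htn : t = n := by
    have hcast : (t : ℂ) = n := by
      refine mul_right_cancel₀ Complex.two_pi_I_ne_zero ?_
      rw [← hn]
      push_cast
      ring
    exact_mod_cast hcast
  have hn0 : (0 : ℤ) < n := by exact_mod_cast htn ▸ ht0
  have hn1 : n < (1 : ℤ) := by exact_mod_cast htn ▸ ht1
  omega

theorem tendsto_sum_sin_div (x : ℝ) :
    Tendsto (fun M : ℕ => ∑ m ∈ Icc 1 M, sin (2 * π * m * x) / m) atTop
      (nhds (π * sawtooth x)) := by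
  set t := Int.fract x with ht
  have hperiod : ∀ m : ℕ, sin (2 * π * m * x) = sin (2 * π * m * t) := fun m => by
    rw [← sin_sub_int_mul_two_pi (2 * π * m * x) (m * ⌊x⌋), ht, ← Int.self_sub_floor]
    push_cast
    ring_nf
  simp only [hperiod]
  rcases eq_or_ne t 0 with hzero | hzero
  · simp [sawtooth, ← ht, hzero]
  have ht0 : 0 < t := lt_of_le_of_ne (Int.fract_nonneg x) hzero.symm
  have ht1 : t < 1 := Int.fract_lt_one x
  have him := (Complex.continuous_im.tendsto _).comp
    (tendsto_sum_pow_div (Complex.norm_exp_ofReal_mul_I (2 * π * t))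
      (exp_two_pi_mul_I_ne_one ht0 ht1))
  rw [Complex.neg_im, Complex.log_im, arg_one_sub_exp ht0 ht1] at him
  have hvalue : π * sawtooth x = -(π * (t - 1 / 2)) := by
    rw [sawtooth, if_neg hzero]
    ring
  rw [hvalue]
  refine ((tendsto_add_atTop_iff_nat 1).2 him).congr fun M => ?_
  rw [Function.comp_apply, Complex.im_sum, sum_range_succ', ← Ico_add_one_right_eq_Icc,
    sum_Ico_eq_sum_range, add_tsub_cancel_right, Nat.cast_zero, div_zero, Complex.zero_im,
    add_zero]
  refine sum_congr rfl fun m _ => ?_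
  rw [add_comm 1 m, Complex.div_natCast_im, ← Complex.exp_nat_mul, ← mul_assoc,
    ← Complex.ofReal_natCast, ← Complex.ofReal_mul, Complex.exp_ofReal_mul_I_im]
  ring_nf

/-! ### The finite Fourier expansion and the cotangent formula for `V₁` -/

theorem sum_Ico_cos_eq_neg_one {k n : ℕ} (hn : 0 < n) (hnk : n < k) :
    ∑ j ∈ Ico 1 k, cos (2 * π * j * n / k) = -1 := by
  have hk : (k : ℝ) ≠ 0 := Nat.cast_ne_zero.2 (by omega)
  set w := Complex.exp ((2 * π * (n / k : ℝ) : ℝ) * Complex.I) with hw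
  have hpow : ∀ j : ℕ, w ^ j = Complex.exp ((2 * π * j * n / k : ℝ) * Complex.I) := fun j => by
    rw [hw, ← Complex.exp_nat_mul]
    push_cast
    ring_nf
  have hw1 : w ≠ 1 := exp_two_pi_mul_I_ne_one (by positivity)
    ((div_lt_one (by positivity)).2 (Nat.cast_lt.2 hnk))
  have hwk : w ^ k = 1 := by
    rw [hpow, mul_right_comm, mul_div_assoc, div_self hk, mul_one, mul_comm (2 * π)]
    push_cast
    rw [mul_assoc]
    exact Complex.exp_nat_mul_two_pi_mul_I n
  have hsum : ∑ j ∈ range k, w ^ j = 0 := by rw [geom_sum_eq hw1, hwk, sub_self, zero_div]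
  have hre := congrArg Complex.re hsum
  simp only [hpow, Complex.re_sum, Complex.exp_ofReal_mul_I_re, Complex.zero_re] at hre
  rw [range_eq_Ico, sum_eq_sum_Ico_succ_bot (by omega)] at hre
  norm_num at hre
  linarith

theorem cot_mul_sin_add_two_mul {x : ℝ} (hx : sin x ≠ 0) (y : ℝ) :
    cot x * sin (y + 2 * x) = cot x * sin y + (cos (y + 2 * x) + cos y) := by
  rw [cot_eq_cos_div_sin, sin_add, cos_add, sin_two_mul, cos_two_mul]
  field_simp
  linear_combination 2 * cos x * sin y * sin_sq_add_cos_sq x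

theorem sum_cot_mul_sin_succ (k m : ℕ) :
    ∑ j ∈ Ico 1 k, cot (π * j / k) * sin (2 * π * j * (m + 1 : ℕ) / k) =
      ∑ j ∈ Ico 1 k, cot (π * j / k) * sin (2 * π * j * m / k) +
        (∑ j ∈ Ico 1 k, cos (2 * π * j * (m + 1 : ℕ) / k) +
          ∑ j ∈ Ico 1 k, cos (2 * π * j * m / k)) := by
  rw [← sum_add_distrib, ← sum_add_distrib]
  refine sum_congr rfl fun j hj => ?_
  obtain ⟨hj0, hjk⟩ := mem_Ico.1 hj
  have hk : (0 : ℝ) < k := Nat.cast_pos.2 (by omega)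
  have hsin : sin (π * j / k) ≠ 0 := by
    refine (sin_pos_of_pos_of_lt_pi ?_ ?_).ne'
    · exact div_pos (mul_pos pi_pos (Nat.cast_pos.2 hj0)) hk
    · rw [div_lt_iff₀ hk]
      exact mul_lt_mul_of_pos_left (Nat.cast_lt.2 hjk) pi_pos
  have hnext : 2 * π * j * (m + 1 : ℕ) / k = 2 * π * j * m / k + 2 * (π * j / k) := by
    push_cast
    ring
  rw [hnext, cot_mul_sin_add_two_mul hsin]

theorem sum_cot_mul_sin {k n : ℕ} (hn : 0 < n) (hnk : n < k) :
    ∑ j ∈ Ico 1 k, cot (π * j / k) * sin (2 * π * j * n / k) = k - 2 * n := by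
  induction n, hn using Nat.le_induction with
  | base =>
    rw [sum_cot_mul_sin_succ, zero_add, sum_Ico_cos_eq_neg_one zero_lt_one hnk]
    simp only [Nat.cast_zero, mul_zero, zero_div, sin_zero, cos_zero, sum_const_zero, sum_const,
      Nat.card_Ico, nsmul_eq_mul, Nat.cast_sub (show 1 ≤ k by omega)]
    push_cast
    ring
  | succ m hm ih =>
    rw [sum_cot_mul_sin_succ, ih (by omega), sum_Ico_cos_eq_neg_one hm (by omega),
      sum_Ico_cos_eq_neg_one m.succ_pos hnk]
    push_cast
    ring

theorem sawtooth_div_eq_sum_cot_mul_sin {k : ℕ} (hk : 0 < k) (n : ℤ) :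
    sawtooth (n / k) = ∑ j ∈ Ico 1 k, 1 / (2 * k) * cot (π * j / k) * sin (2 * π * j * n / k) := by
  have hk0 : (k : ℝ) ≠ 0 := Nat.cast_ne_zero.2 hk.ne'
  obtain ⟨s, hs⟩ := Int.eq_ofNat_of_zero_le (Int.emod_nonneg n (Int.natCast_ne_zero.2 hk.ne'))
  have hsk : s < k := by
    have := Int.emod_lt_of_pos n (Int.natCast_pos.2 hk)
    omega
  have hn : (n : ℝ) = s + (n / k : ℤ) * k := by
    have := Int.emod_add_mul_ediv n k
    rw [hs, mul_comm] at this
    exact_mod_cast this.symm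
  have hsaw : sawtooth (n / k) = sawtooth (s / k) := by
    rw [hn, add_div, mul_div_cancel_right₀ _ hk0, sawtooth_add_intCast]
  have hsin : ∀ j : ℕ, sin (2 * π * j * n / k) = sin (2 * π * j * s / k) := fun j => by
    rw [hn, ← sin_add_int_mul_two_pi (2 * π * j * s / k) (j * (n / k : ℤ))]
    congr 1
    push_cast
    field_simp
  simp only [hsaw, hsin, mul_assoc (1 / (2 * k : ℝ)), ← mul_sum]
  rcases s.eq_zero_or_pos with rfl | hs0
  · simp [sawtooth]
  · have hfract : Int.fract ((s : ℝ) / k) = s / k :=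
      Int.fract_eq_self.2 ⟨by positivity, (div_lt_one (by positivity)).2 (Nat.cast_lt.2 hsk)⟩
    rw [sum_cot_mul_sin hs0 hsk, sawtooth, hfract, if_neg (by positivity)]
    field_simp

theorem tendsto_V1sum {k : ℕ} (hk : 0 < k) (n : ℤ) (α : ℝ) :
    Tendsto (V1sum (n / k) α) atTop (nhds (∑ j ∈ Ico 1 k, π / (2 * k) * cot (π * j / k) *
      (sawtooth (j * (n / k) + α) + sawtooth (j * (n / k) - α)))) := by
  have hterm : ∀ M, V1sum (n / k) α M = ∑ j ∈ Ico 1 k, 1 / (2 * k) * cot (π * j / k) *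
      (∑ m ∈ Icc 1 M, sin (2 * π * m * (j * (n / k) + α)) / m +
        ∑ m ∈ Icc 1 M, sin (2 * π * m * (j * (n / k) - α)) / m) := fun M => by
    simp only [V1sum, ← sum_add_distrib, mul_sum]
    rw [sum_comm]
    refine sum_congr rfl fun m _ => ?_
    have hm : (m : ℝ) * (n / k) = (m * n : ℤ) / k := by push_cast; ring
    rw [hm, sawtooth_div_eq_sum_cot_mul_sin hk, mul_sum, mul_sum]
    refine sum_congr rfl fun j _ => ?_
    have hadd : 2 * π * m * (j * (n / k) + α) = 2 * π * j * (m * n : ℤ) / k + 2 * π * m * α := by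
      push_cast
      ring
    have hsub : 2 * π * m * (j * (n / k) - α) = 2 * π * j * (m * n : ℤ) / k - 2 * π * m * α := by
      push_cast
      ring
    rw [hadd, hsub, sin_add, sin_sub]
    ring
  have hvalue : ∀ j : ℕ, π / (2 * k) * cot (π * j / k) *
      (sawtooth (j * (n / k) + α) + sawtooth (j * (n / k) - α)) =
        1 / (2 * k) * cot (π * j / k) *
          (π * sawtooth (j * (n / k) + α) + π * sawtooth (j * (n / k) - α)) := fun j => by ring
  simp only [funext hterm, hvalue]
  exact tendsto_finsetSum _ fun j _ => ((tendsto_sum_sin_div (j * (n / k) + α)).add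
    (tendsto_sum_sin_div (j * (n / k) - α))).const_mul _

/-! ### Replacing the cotangent by its polar part -/

theorem abs_cot_sub_one_div_le {y : ℝ} (hy0 : 0 < y) (hy1 : y ≤ π / 2) : |cot y - 1 / y| ≤ 1 := by
  have hsin : 0 < sin y := sin_pos_of_pos_of_lt_pi hy0 (by linarith [pi_pos])
  have hcos : 0 ≤ cos y := cos_nonneg_of_mem_Icc ⟨by linarith, hy1⟩
  have hupper : cot y ≤ 1 / y := by
    rw [cot_eq_cos_div_sin, div_le_div_iff₀ hsin hy0, one_mul]
    rcases hcos.eq_or_lt with hzero | hpos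
    · rw [← hzero, zero_mul]
      exact hsin.le
    · have htan := le_tan hy0.le (lt_of_le_of_ne hy1 fun h => by simp [h] at hpos)
      rwa [tan_eq_sin_div_cos, le_div_iff₀ hpos, mul_comm] at htan
  have hlower : 1 / y - y / 2 ≤ cot y := by
    have hcos_le : 1 - y ^ 2 / 2 ≤ cos y := one_sub_sq_div_two_le_cos
    have heq : 1 / y - y / 2 = (1 - y ^ 2 / 2) / y := by field_simp
    rw [heq, cot_eq_cos_div_sin]
    calc (1 - y ^ 2 / 2) / y ≤ cos y / y := by gcongr
      _ ≤ cos y / sin y := div_le_div_of_nonneg_left hcos hsin (sin_le hy0.le)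
  rw [abs_le]
  constructor <;> linarith [pi_lt_four]

theorem cot_pi_sub (y : ℝ) : cot (π - y) = -cot y := by
  rw [cot_eq_cos_div_sin, cot_eq_cos_div_sin, cos_pi_sub, sin_pi_sub, neg_div]

theorem abs_pi_mul_cot_sub_le {x : ℝ} (hx0 : 0 < x) (hx1 : x < 1) :
    |π * cot (π * x) - (1 / x - 1 / (1 - x))| ≤ 6 := by
  wlog hhalf : x ≤ 1 / 2 generalizing x
  · have hreflect := this (x := 1 - x) (by linarith) (by linarith) (by linarith)
    rw [mul_sub, mul_one, cot_pi_sub, sub_sub_cancel, ← abs_neg] at hreflect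
    convert hreflect using 2
    ring
  have hcot := abs_cot_sub_one_div_le (mul_pos pi_pos hx0) (by nlinarith [pi_pos])
  have hsplit : π * cot (π * x) - (1 / x - 1 / (1 - x)) =
      π * (cot (π * x) - 1 / (π * x)) + 1 / (1 - x) := by
    have : 1 - x ≠ 0 := by linarith
    field_simp
    ring
  have hpole : |1 / (1 - x)| ≤ 2 := by
    rw [abs_of_pos (one_div_pos.2 (by linarith)), div_le_iff₀ (by linarith)]
    linarith
  have hregular : |π * (cot (π * x) - 1 / (π * x))| ≤ 4 := by
    rw [abs_mul, abs_of_pos pi_pos]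
    nlinarith [pi_pos, pi_lt_four]
  rw [hsplit]
  linarith [abs_add_le (π * (cot (π * x) - 1 / (π * x))) (1 / (1 - x))]

theorem abs_cot_sub_polar_le {j k : ℕ} (hj : j ∈ Ico 1 k) :
    |π / (2 * k) * cot (π * j / k) - (1 / (j : ℝ) - 1 / (k - j)) / 2| ≤ 3 / k := by
  have hj0 : (0 : ℝ) < j := Nat.cast_pos.2 (mem_Ico.1 hj).1
  have hjk : (j : ℝ) < k := Nat.cast_lt.2 (mem_Ico.1 hj).2
  have hk0 : (0 : ℝ) < k := hj0.trans hjk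
  have hpolar := abs_pi_mul_cot_sub_le (div_pos hj0 hk0) ((div_lt_one hk0).2 hjk)
  have hscale : π / (2 * k) * cot (π * j / k) - (1 / (j : ℝ) - 1 / (k - j)) / 2 =
      (π * cot (π * (j / k)) - (1 / (j / k : ℝ) - 1 / (1 - j / k))) / (2 * k) := by
    have hne : (k : ℝ) - j ≠ 0 := by linarith
    have hcompl : (1 : ℝ) - j / k = (k - j) / k := by field_simp
    rw [hcompl, mul_div_assoc]
    field_simp
  rw [hscale, abs_div, abs_of_pos (by positivity : (0 : ℝ) < 2 * k),
    div_le_div_iff₀ (by positivity) hk0]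
  nlinarith

theorem sum_div_eq_sum_polar_mul {k : ℕ} {g : ℕ → ℝ} (hodd : ∀ j ∈ Ico 1 k, g (k - j) = -g j) :
    ∑ j ∈ Ico 1 k, g j / j = ∑ j ∈ Ico 1 k, (1 / (j : ℝ) - 1 / (k - j)) / 2 * g j := by
  have hreflect : ∑ j ∈ Ico 1 k, g j / j = -∑ j ∈ Ico 1 k, g j / ((k : ℝ) - j) := by
    have hsum := sum_Ico_reflect (fun j => g j / (j : ℝ)) 1 (m := k) (n := k) (by omega)
    rw [add_tsub_cancel_left, add_tsub_cancel_right] at hsum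
    rw [← hsum, ← sum_neg_distrib]
    refine sum_congr rfl fun j hj => ?_
    rw [hodd j hj, Nat.cast_sub (mem_Ico.1 hj).2.le, neg_div]
  have havg : ∑ j ∈ Ico 1 k, g j / (j : ℝ) =
      (∑ j ∈ Ico 1 k, g j / j - ∑ j ∈ Ico 1 k, g j / ((k : ℝ) - j)) / 2 := by linarith
  rw [havg, ← sum_sub_distrib, sum_div]
  exact sum_congr rfl fun j _ => by ring

theorem abs_sum_cot_mul_sub_sum_div_le {k : ℕ} {g : ℕ → ℝ}
    (hodd : ∀ j ∈ Ico 1 k, g (k - j) = -g j) (hg : ∀ j, |g j| ≤ 1) :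
    |∑ j ∈ Ico 1 k, π / (2 * k) * cot (π * j / k) * g j - ∑ j ∈ Ico 1 k, g j / j| ≤ 3 := by
  have hterm : ∀ j ∈ Ico 1 k, |π / (2 * k) * cot (π * j / k) * g j -
      (1 / (j : ℝ) - 1 / (k - j)) / 2 * g j| ≤ 3 / k := fun j hj => by
    rw [← sub_mul, abs_mul]
    exact (mul_le_of_le_one_right (abs_nonneg _) (hg j)).trans (abs_cot_sub_polar_le hj)
  calc _ ≤ ∑ _j ∈ Ico 1 k, (3 / k : ℝ) := by
        rw [sum_div_eq_sum_polar_mul hodd, ← sum_sub_distrib]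
        exact (abs_sum_le_sum_abs _ _).trans (sum_le_sum hterm)
    _ = (k - 1 : ℕ) * (3 / k : ℝ) := by rw [sum_const, Nat.card_Ico, nsmul_eq_mul]
    _ ≤ k * (3 / k : ℝ) := by gcongr; omega
    _ = 3 * (k / k : ℝ) := by ring
    _ ≤ 3 := by linarith [div_self_le_one (k : ℝ)]

theorem abs_le_of_tendsto_V1sum {k : ℕ} (hk : 0 < k) (n : ℤ) (α : ℝ) {V1 : ℝ}
    (hV : Tendsto (V1sum (n / k) α) atTop (nhds V1)) :
    |V1| ≤ |∑ j ∈ Ico 1 k, sawtooth (j * (n / k) + α) / j| +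
      |∑ j ∈ Ico 1 k, sawtooth (j * (n / k) + -α) / j| + 3 := by
  have hk0 : (k : ℝ) ≠ 0 := Nat.cast_ne_zero.2 hk.ne'
  set g : ℕ → ℝ := fun j => sawtooth (j * (n / k) + α) + sawtooth (j * (n / k) - α) with hgdef
  have hV1 : V1 = ∑ j ∈ Ico 1 k, π / (2 * k) * cot (π * j / k) * g j :=
    tendsto_nhds_unique hV (tendsto_V1sum hk n α)
  have hbound : ∀ j, |g j| ≤ 1 := fun j => (abs_add_le _ _).trans
    (by linarith [abs_sawtooth_le (j * (n / k) + α), abs_sawtooth_le (j * (n / k) - α)])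
  have hreflect : ∀ j ∈ Ico 1 k, ∀ β, sawtooth ((k - j : ℕ) * (n / k) + β) =
      -sawtooth (j * (n / k) - β) := fun j hj β => by
    rw [← sawtooth_neg, ← sawtooth_add_intCast (-(j * (n / k) - β)) n,
      Nat.cast_sub (mem_Ico.1 hj).2.le]
    congr 1
    field_simp
    ring
  have hodd : ∀ j ∈ Ico 1 k, g (k - j) = -g j := fun j hj => by
    have hminus := hreflect j hj (-α)
    rw [sub_neg_eq_add, ← sub_eq_add_neg] at hminus
    simp only [hgdef, hreflect j hj α, hminus]
    ring
  have hsplit : ∑ j ∈ Ico 1 k, g j / j = ∑ j ∈ Ico 1 k, sawtooth (j * (n / k) + α) / j +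
      ∑ j ∈ Ico 1 k, sawtooth (j * (n / k) + -α) / j := by
    rw [← sum_add_distrib]
    exact sum_congr rfl fun j _ => by rw [hgdef, ← sub_eq_add_neg, add_div]
  have happrox := abs_sum_cot_mul_sub_sum_div_le hodd hbound
  rw [← hV1, hsplit] at happrox
  have := abs_sub_abs_le_abs_sub V1 (∑ j ∈ Ico 1 k, sawtooth (j * (n / k) + α) / j +
    ∑ j ∈ Ico 1 k, sawtooth (j * (n / k) + -α) / j)
  linarith [abs_add_le (∑ j ∈ Ico 1 k, sawtooth (j * (n / k) + α) / j)
    (∑ j ∈ Ico 1 k, sawtooth (j * (n / k) + -α) / j)]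

/-! ### Convergents -/

/-- The denominators of the convergents of `[0; a 0, a 1, …]`; the digits are indexed from `0`, so
`a m` is the partial quotient usually called `b_{m+1}`. -/
def convergentDen (a : ℕ → ℕ) : ℕ → ℕ
  | 0 => 1
  | 1 => a 0
  | m + 2 => a (m + 1) * convergentDen a (m + 1) + convergentDen a m

/-- The numerators of the convergents of `[0; a 0, a 1, …]`, with the digits indexed as for
`convergentDen`. -/
def convergentNum (a : ℕ → ℕ) : ℕ → ℕ
  | 0 => 0
  | 1 => 1
  | m + 2 => a (m + 1) * convergentNum a (m + 1) + convergentNum a m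

theorem eq_of_three_term_recurrence {R : Type*} [Add R] [Mul R] {a x y : ℕ → R} {r : ℕ}
    (h0 : x 0 = y 0) (h1 : 1 ≤ r → x 1 = y 1)
    (hx : ∀ m, m + 2 ≤ r → x (m + 2) = a (m + 1) * x (m + 1) + x m)
    (hy : ∀ m, m + 2 ≤ r → y (m + 2) = a (m + 1) * y (m + 1) + y m) : ∀ m ≤ r, x m = y m
  | 0, _ => h0
  | 1, hm => h1 hm
  | m + 2, hm => by
    rw [hx m hm, hy m hm, eq_of_three_term_recurrence h0 h1 hx hy (m + 1) (by omega),
      eq_of_three_term_recurrence h0 h1 hx hy m (by omega)]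

theorem convergentNum_mul_convergentDen_sub (a : ℕ → ℕ) (m : ℕ) :
    (convergentNum a (m + 1) : ℤ) * convergentDen a m -
      convergentNum a m * convergentDen a (m + 1) = (-1) ^ m := by
  induction m with
  | zero => simp [convergentNum, convergentDen]
  | succ m ih =>
    rw [convergentNum, convergentDen, pow_succ, ← ih]
    push_cast
    ring

theorem exists_eq_convergentDen_add_mul {a : ℕ → ℕ} {r : ℕ} {hbar : ℤ}
    (hinv : convergentNum a r * hbar ≡ 1 [ZMOD convergentDen a r]) :
    ∃ c : ℤ, hbar = (-1) ^ (r + 1) * convergentDen a (r + 1) + c * convergentDen a r := by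
  obtain ⟨t, ht⟩ := hinv.symm.dvd
  have hdet := convergentNum_mul_convergentDen_sub a r
  have hsign : ((-1 : ℤ) ^ r) ^ 2 = 1 := by rw [← pow_mul, mul_comm, pow_mul, neg_one_sq, one_pow]
  refine ⟨(-1) ^ r * (hbar * convergentNum a (r + 1) - t * convergentDen a (r + 1)), ?_⟩
  rw [pow_succ]
  linear_combination -hbar * hsign - (-1) ^ r * hbar * hdet -
    (-1) ^ r * convergentDen a (r + 1) * ht

section PositiveDigits

variable {a : ℕ → ℕ} (ha : ∀ m, 1 ≤ a m)

include ha

theorem convergentDen_pos : ∀ m, 0 < convergentDen a m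
  | 0 => one_pos
  | 1 => ha 0
  | m + 2 => Nat.add_pos_right _ (convergentDen_pos m)

theorem convergentDen_add_le (m : ℕ) :
    convergentDen a m + convergentDen a (m + 1) ≤ convergentDen a (m + 2) := by
  rw [convergentDen, add_comm]
  exact Nat.add_le_add_right (Nat.le_mul_of_pos_left _ (ha (m + 1))) _

theorem convergentDen_monotone : Monotone (convergentDen a) :=
  monotone_nat_of_le_succ fun
    | 0 => ha 0
    | m + 1 => (Nat.le_add_left _ _).trans (convergentDen_add_le ha m)

theorem abs_rotationSum_inverse_le {r : ℕ} {hbar : ℤ}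
    (hinv : convergentNum a r * hbar ≡ 1 [ZMOD convergentDen a r]) {m : ℕ} (hmr : m ≤ r) (n : ℕ)
    (β : ℝ) : |rotationSum n (hbar / convergentDen a r) β| ≤
      2 * ∑ i ∈ Ico m r, (convergentDen a (i + 1) : ℝ) / convergentDen a i +
        n * (convergentDen a m / (2 * convergentDen a r)) := by
  have hpos : ∀ m, (0 : ℝ) < convergentDen a m := fun m => Nat.cast_pos.2 (convergentDen_pos ha m)
  have heuclid := abs_rotationSum_euclidean_le hpos
    (Nat.mono_cast.comp (convergentDen_monotone ha))
    (fun m => ⟨a (m + 1), by rw [convergentDen]; push_cast; rfl⟩) hmr n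
  obtain ⟨c, hc⟩ := exists_eq_convergentDen_add_mul hinv
  have hslope : (hbar : ℝ) / convergentDen a r =
      (-1) ^ (r + 1) * (convergentDen a (r + 1) / convergentDen a r) + c := by
    rw [hc]
    push_cast
    field_simp [(hpos r).ne']
  rw [hslope, rotationSum_add_intCast]
  rcases neg_one_pow_eq_or ℝ (r + 1) with hsign | hsign
  · rw [hsign, one_mul]
    exact heuclid β
  · rw [hsign, neg_one_mul, rotationSum_neg]
    exact heuclid _

theorem abs_limit_V1sum_convergent_le {r : ℕ} {hbar : ℤ}
    (hinv : convergentNum a r * hbar ≡ 1 [ZMOD convergentDen a r]) {α V1 : ℝ}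
    (hV : Tendsto (V1sum (hbar / convergentDen a r) α) atTop (nhds V1)) :
    |V1| ≤ 1 / convergentDen a r * ∑ m ∈ range r, (convergentDen a (m + 1) : ℝ) *
      log (convergentDen a (m + 1) / convergentDen a m) + 43 := by
  have hweighted : ∀ β, |∑ j ∈ Ico 1 (convergentDen a r),
      sawtooth (j * (hbar / convergentDen a r) + β) / j| ≤
        1 / (2 * convergentDen a r) * ∑ m ∈ range r, (convergentDen a (m + 1) : ℝ) *
          log (convergentDen a (m + 1) / convergentDen a m) + 20 := fun β =>
    abs_sum_div_le_of_abs_partialSum_le (v := fun m => (convergentDen a m : ℝ))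
      (fun m => Nat.cast_pos.2 (convergentDen_pos ha m))
      (Nat.mono_cast.comp (convergentDen_monotone ha))
      (fun m => by exact_mod_cast convergentDen_add_le ha m)
      (by rw [convergentDen, Nat.cast_one, div_one]) (fun _ => abs_sawtooth_le _)
      fun m hm n => abs_sum_sawtooth_le (abs_rotationSum_inverse_le ha hinv hm n) β
  have hdouble : ∀ S : ℝ, 1 / (convergentDen a r : ℝ) * S =
      2 * (1 / (2 * convergentDen a r) * S) := fun S => by field_simp
  have hV1 := abs_le_of_tendsto_V1sum (convergentDen_pos ha r) hbar α hV
  rw [hdouble]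
  linarith [hweighted α, hweighted (-α)]

end PositiveDigits

theorem V1_inverse_bound_continued_fraction_general {r : ℕ} {hbar : ℤ} {b u v : ℕ → ℕ}
    (hinv : u r * hbar ≡ 1 [ZMOD v r]) (hb : ∀ m, 1 ≤ m → m ≤ r → 1 ≤ b m)
    (hv0 : v 0 = 1) (hu0 : u 0 = 0) (hv1 : 1 ≤ r → v 1 = b 1) (hu1 : 1 ≤ r → u 1 = 1)
    (hv : ∀ m, 2 ≤ m → m ≤ r → v m = b m * v (m - 1) + v (m - 2))
    (hu : ∀ m, 2 ≤ m → m ≤ r → u m = b m * u (m - 1) + u (m - 2))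
    {α V1 : ℝ} (hV : Tendsto (V1sum (hbar / v r) α) atTop (nhds V1)) :
    |V1| ≤ 1 / (v r : ℝ) * ∑ m ∈ Icc 1 r, (v m : ℝ) * log (v m / v (m - 1)) + 43 := by
  -- The digits beyond `r` are unconstrained, so they are replaced by positive ones.
  set a : ℕ → ℕ := fun m => max (b (m + 1)) 1
  have ha : ∀ m, m + 1 ≤ r → b (m + 1) = a m := fun m hm =>
    (max_eq_left (hb (m + 1) (by omega) hm)).symm
  have hvden : ∀ m ≤ r, v m = convergentDen a m :=
    eq_of_three_term_recurrence (a := a) hv0 (fun hr => (hv1 hr).trans (ha 0 hr))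
      (fun m hm => ha (m + 1) hm ▸ hv (m + 2) (by omega) hm) fun _ _ => rfl
  have hunum : ∀ m ≤ r, u m = convergentNum a m :=
    eq_of_three_term_recurrence (a := a) hu0 hu1
      (fun m hm => ha (m + 1) hm ▸ hu (m + 2) (by omega) hm) fun _ _ => rfl
  rw [hvden r le_rfl, hunum r le_rfl] at hinv
  rw [hvden r le_rfl] at hV ⊢
  have hsum : ∑ m ∈ Icc 1 r, (v m : ℝ) * log (v m / v (m - 1)) =
      ∑ m ∈ range r, (convergentDen a (m + 1) : ℝ) *
        log (convergentDen a (m + 1) / convergentDen a m) := by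
    rw [← Ico_add_one_right_eq_Icc, sum_Ico_eq_sum_range, add_tsub_cancel_right]
    refine sum_congr rfl fun m hm => ?_
    have hmr := mem_range.1 hm
    rw [add_comm 1 m, add_tsub_cancel_right, hvden (m + 1) hmr, hvden m hmr.le]
  rw [hsum]
  exact abs_limit_V1sum_convergent_le (fun m => le_max_right _ _) hinv hV

/-- Bound for `V₁(h̄/k, α)` in terms of the continued fraction expansion of `h/k`:
`|V₁(h̄/k, α)| ≤ (1/k) ∑_{m=1}^{r} v_m log(v_m/v_{m-1}) + C` uniformly in `α ∈ (1/k)ℤ`,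
where `h̄` is any inverse of `h` mod `k` and `v_0, …, v_r` are the denominators of the
convergents of `h/k = [0; b_1, …, b_r]` (with numerators `u_0, …, u_r`). -/
theorem V1_inverse_bound_continued_fraction :
    ∃ C : ℝ, 0 < C ∧ ∀ h k : ℕ, 1 ≤ h → h < k → Nat.Coprime h k →
      ∀ hbar : ℤ, ((h : ℤ) * hbar) % (k : ℤ) = 1 % (k : ℤ) →
      ∀ (r : ℕ) (b u v : ℕ → ℕ),
        (∀ m, 1 ≤ m → m ≤ r → 1 ≤ b m) → (1 < r → 2 ≤ b r) →
        v 0 = 1 → u 0 = 0 →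
        (1 ≤ r → v 1 = b 1) → (1 ≤ r → u 1 = 1) →
        (∀ m, 2 ≤ m → m ≤ r → v m = b m * v (m - 1) + v (m - 2)) →
        (∀ m, 2 ≤ m → m ≤ r → u m = b m * u (m - 1) + u (m - 2)) →
        v r = k → u r = h →
        ∀ α : ℝ, (∃ j : ℤ, α = (j : ℝ) / k) →
          ∀ V1 : ℝ, Tendsto (V1sum ((hbar : ℝ) / k) α) atTop (nhds V1) →
            |V1| ≤ (1 / (k : ℝ)) * (∑ m ∈ Finset.Icc 1 r,
                (v m : ℝ) * Real.log ((v m : ℝ) / (v (m - 1) : ℝ))) + C := by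
  refine ⟨43, by norm_num, ?_⟩
  rintro h k - - - hbar hinv r b u v hb - hv0 hu0 hv1 hu1 hv hu rfl rfl α - V1 hV
  exact V1_inverse_bound_continued_fraction_general hinv hb hv0 hu0 hv1 hu1 hv hu hV
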